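/- Let r, m ∈ ℕ and for each i ∈ {1,…,m} let A_i be a u_i×v_i image partition regular matrix with u_i, v_i ∈ ℕ. If ℕ = E_1 ∪ … ∪ E_r, then there exist k ∈ {1,…,r} and x^(i) ∈ ℕ^{v_i} for 1 ≤ i ≤ m such that P(A_1x^(1), A_2x^(2), …, A_mx^(m)) ⊆ E_k. -/

import Mathlib

/- `ℕ+` plays the role of the paper's `ℕ = {1,2,3,…}`.  `Ultrafilter ℕ+` is `βℕ`. -/

/-- Product of ultrafilters: `U ∈ umul p q ↔ {x | {y | x*y ∈ U} ∈ q} ∈ p`. -/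
def umul (p q : Ultrafilter ℕ+) : Ultrafilter ℕ+ :=
  p.bind fun x => q.map fun y => x * y

/-- Sum of ultrafilters: `U ∈ uadd p q ↔ {x | {y | x+y ∈ U} ∈ q} ∈ p`. -/
def uadd (p q : Ultrafilter ℕ+) : Ultrafilter ℕ+ :=
  p.bind fun x => q.map fun y => x + y

/-- The matrix-vector product `Ax` (computed in `ℚ`) of a row-finite matrix `A`
with a vector `x` of positive integers. -/
noncomputable def mulVecQ {ι κ : Type} (A : ι → κ → ℚ) (x : κ → ℕ+) : ι → ℚ :=
  fun i => ∑ᶠ j, A i j * ((x j : ℕ) : ℚ)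

/-- All entries of the vector `y` are (positive) natural numbers lying in `P`. -/
def entriesIn {ι : Type} (y : ι → ℚ) (P : Set ℕ+) : Prop :=
  ∀ i, ∃ n ∈ P, y i = ((n : ℕ) : ℚ)

/-- `A` is image partition regular: for every finite coloring of `ℕ` there is
a vector `x` over `ℕ` all entries of whose image `Ax` are monochromatic. -/
def IPR {ι κ : Type} (A : ι → κ → ℚ) : Prop :=
  ∀ (r : ℕ) (c : ℕ+ → Fin r), ∃ (k : Fin r) (x : κ → ℕ+),
    entriesIn (mulVecQ A x) {n | c n = k}

/-- `I(A) = {p ∈ βℕ : for every P ∈ p there is x over ℕ with all entries of Ax in P}`. -/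
def ISet {ι κ : Type} (A : ι → κ → ℚ) : Set (Ultrafilter ℕ+) :=
  {p | ∀ P ∈ p, ∃ x : κ → ℕ+, entriesIn (mulVecQ A x) P}

/-!
Call a family `𝓕` of sets *partition regular* if every finite cover has a class containing a member
of `𝓕`. By compactness this holds iff some ultrafilter `p` *witnesses* it: every `P ∈ p` contains a
member of `𝓕`. If `p` witnesses `𝓕`, `q` witnesses `𝓖`, and `P ∈ p * q`, then `P` contains `F * G`:
choose `F ∈ 𝓕` inside `{a | a⁻¹ P ∈ q}`; as `F` is finite, `⋂ a ∈ F, a⁻¹ P` is still in `q`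
and so contains some `G ∈ 𝓖`. So products of partition regular families of finite sets are partition
regular, and this applies to the families of images of the matrices.
-/

open Filter
open scoped Pointwise

section PartitionRegular

variable {α : Type*} {𝓕 : Set (Set α)}

/-- A family `𝓕` of sets is partition regular if every finite cover of the ambient type has a class
containing a member of `𝓕`. Covers, rather than colourings, are used as in Mathlib's
`Hindman.FP_partition_regular`. -/
def IsPartitionRegular (𝓕 : Set (Set α)) : Prop :=
  ∀ 𝒞 : Set (Set α), 𝒞.Finite → ⋃₀ 𝒞 = Set.univ → ∃ C ∈ 𝒞, ∃ F ∈ 𝓕, F ⊆ C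

theorem IsPartitionRegular.exists_ultrafilter (h𝓕 : IsPartitionRegular 𝓕) :
    ∃ p : Ultrafilter α, ∀ P ∈ p, ∃ F ∈ 𝓕, F ⊆ P := by
  have finite_inter_nonempty (T : Finset (Set α)) (hT : ∀ P ∈ T, ¬∃ F ∈ 𝓕, F ⊆ Pᶜ) :
      (⋂₀ (T : Set (Set α))).Nonempty := by
    by_contra hempty
    have hcover : ⋃₀ (compl '' (T : Set (Set α))) = Set.univ := by
      rw [← Set.compl_sInter, Set.not_nonempty_iff_eq_empty.mp hempty, Set.compl_empty]
    obtain ⟨_, ⟨P, hP, rfl⟩, hF⟩ := h𝓕 _ (T.finite_toSet.image compl) hcover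
    exact hT P hP hF
  obtain ⟨p, hp⟩ := Ultrafilter.exists_ultrafilter_of_finite_inter_nonempty
    {P | ¬∃ F ∈ 𝓕, F ⊆ Pᶜ} finite_inter_nonempty
  refine ⟨p, fun P hP => by_contra fun hnone => ?_⟩
  have hPc : Pᶜ ∈ p := hp (by rwa [Set.mem_ofPred_eq, compl_compl])
  exact Ultrafilter.compl_mem_iff_notMem.mp hPc hP

theorem isPartitionRegular_iff_exists_ultrafilter :
    IsPartitionRegular 𝓕 ↔ ∃ p : Ultrafilter α, ∀ P ∈ p, ∃ F ∈ 𝓕, F ⊆ P := by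
  refine ⟨IsPartitionRegular.exists_ultrafilter, fun ⟨p, hp⟩ 𝒞 hfin hcover => ?_⟩
  have hmem : ⋃₀ 𝒞 ∈ p := hcover ▸ univ_mem
  obtain ⟨C, hC, hCp⟩ := (Ultrafilter.finite_sUnion_mem_iff hfin).mp hmem
  exact ⟨C, hC, hp C hCp⟩

end PartitionRegular

section Products

attribute [local instance] Ultrafilter.mul

theorem IsPartitionRegular.mul {M : Type*} [Mul M] {𝓕 𝓖 : Set (Set M)}
    (h𝓕 : IsPartitionRegular 𝓕) (h𝓖 : IsPartitionRegular 𝓖) (hfin : ∀ F ∈ 𝓕, F.Finite) :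
    IsPartitionRegular (𝓕 * 𝓖) := by
  obtain ⟨p, hp⟩ := h𝓕.exists_ultrafilter
  obtain ⟨q, hq⟩ := h𝓖.exists_ultrafilter
  refine isPartitionRegular_iff_exists_ultrafilter.mpr ⟨p * q, fun P hP => ?_⟩
  have hP' : ∀ᶠ a in p, ∀ᶠ b in q, a * b ∈ P := (Ultrafilter.eventually_mul p q (· ∈ P)).mp hP
  obtain ⟨F, hF, hFP⟩ := hp _ hP'
  have hFq : ∀ᶠ b in q, ∀ a ∈ F, a * b ∈ P := (eventually_all_finite (hfin F hF)).mpr hFP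
  obtain ⟨G, hG, hGP⟩ := hq _ hFq
  exact ⟨F * G, Set.mul_mem_mul hF hG, Set.mul_subset_iff.mpr fun a ha b hb => hGP hb a ha⟩

theorem isPartitionRegular_one {M : Type*} [One M] :
    IsPartitionRegular (1 : Set (Set M)) := by
  intro 𝒞 _ hcover
  obtain ⟨C, hC, hone⟩ := Set.sUnion_eq_univ_iff.mp hcover 1
  exact ⟨C, hC, 1, Set.one_mem_one, Set.one_subset.mpr hone⟩

theorem isPartitionRegular_finsetProd {J M : Type*} [CommMonoid M] (s : Finset J)
    {𝓕 : J → Set (Set M)} (h𝓕 : ∀ j ∈ s, IsPartitionRegular (𝓕 j))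
    (hfin : ∀ j ∈ s, ∀ F ∈ 𝓕 j, F.Finite) :
    IsPartitionRegular (∏ j ∈ s, 𝓕 j) := by
  induction s using Finset.cons_induction with
  | empty => simpa only [Finset.prod_empty] using isPartitionRegular_one
  | cons j s hj ih =>
    rw [Finset.forall_mem_cons] at h𝓕 hfin
    rw [Finset.prod_cons]
    exact h𝓕.1.mul (ih h𝓕.2 hfin.2) hfin.1

end Products

section Images

variable {ι κ : Type}

/-- The sets of entries of those images `Ax`, `x` over `ℕ`, whose entries are all positive
integers. The vector `y` is `Ax`, read in `ℕ+` instead of `ℚ`. -/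
def imageFamily (A : ι → κ → ℚ) : Set (Set ℕ+) :=
  {F | ∃ (x : κ → ℕ+) (y : ι → ℕ+), (∀ i, mulVecQ A x i = ((y i : ℕ) : ℚ)) ∧ Set.range y = F}

theorem finite_of_mem_imageFamily [Finite ι] {A : ι → κ → ℚ} {F : Set ℕ+}
    (hF : F ∈ imageFamily A) : F.Finite := by
  obtain ⟨_, y, _, rfl⟩ := hF
  exact Set.finite_range y

theorem IPR.isPartitionRegular_imageFamily {A : ι → κ → ℚ} (hA : IPR A) :
    IsPartitionRegular (imageFamily A) := by
  intro 𝒞 hfin hcover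
  have hclass (n : ℕ+) : ∃ C : 𝒞, n ∈ C.1 := by
    simpa only [Subtype.exists, exists_prop] using Set.sUnion_eq_univ_iff.mp hcover n
  choose color hcolor using hclass
  have : Finite 𝒞 := hfin
  let e := Finite.equivFin 𝒞
  obtain ⟨k, x, hx⟩ := hA _ (e ∘ color)
  choose y hy hxy using hx
  have hsub : Set.range y ⊆ e.symm k := by
    refine Set.range_subset_iff.mpr fun i => ?_
    have hyi : color (y i) = e.symm k := e.eq_symm_apply.mpr (hy i)
    exact hyi ▸ hcolor (y i)
  exact ⟨e.symm k, (e.symm k).2, Set.range y, ⟨x, y, hxy, rfl⟩, hsub⟩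

end Images

/-- There may be infinitely many columns: `finsum` gives a row of infinite support the value `0`,
which is not in `ℕ+`, so `IPR` forces such matrices to be row-finite. -/
theorem stmt_15_general {J Γ : Type*} [Fintype J] [Finite Γ] {ι κ : J → Type} [∀ j, Finite (ι j)]
    (A : ∀ j, ι j → κ j → ℚ) (hA : ∀ j, IPR (A j))
    (E : Γ → Set ℕ+) (hE : ∀ n : ℕ+, ∃ k, n ∈ E k) :
    ∃ (k : Γ) (x : ∀ j, κ j → ℕ+), ∀ f : ∀ j, ι j, ∃ n ∈ E k,
      (∏ j, mulVecQ (A j) (x j) (f j)) = ((n : ℕ) : ℚ) := by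
  have hprod : IsPartitionRegular (∏ j, imageFamily (A j)) :=
    isPartitionRegular_finsetProd Finset.univ (fun j _ => (hA j).isPartitionRegular_imageFamily)
      fun _ _ _ => finite_of_mem_imageFamily
  have hcover : ⋃₀ Set.range E = Set.univ :=
    Set.sUnion_range E ▸ Set.iUnion_eq_univ_iff.mpr hE
  obtain ⟨_, ⟨k, rfl⟩, _, hF, hFE⟩ := hprod _ (Set.finite_range E) hcover
  obtain ⟨G, hG, rfl⟩ := (Set.mem_fintype_prod _ _).mp hF
  choose x y hxy hy using hG
  refine ⟨k, x, fun f => ⟨∏ j, y j (f j), hFE ?_, ?_⟩⟩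
  · exact Set.finsetProd_mem_finsetProd _ _ _ fun j _ => hy j ▸ Set.mem_range_self (f j)
  · have hcoe : ((∏ j, y j (f j) : ℕ+) : ℕ) = ∏ j, (y j (f j) : ℕ) :=
      map_prod PNat.coeMonoidHom _ _
    simp only [hxy, hcoe, Nat.cast_prod]

/-- Corollary 3.13: let `A 0, …, A (m-1)` be finite image
partition regular matrices and `ℕ = E_1 ∪ … ∪ E_r`.  Then there are `k` and
vectors `x i ∈ ℕ^{v i}` with `P(A 0 (x 0), …, A (m-1) (x (m-1))) ⊆ E_k`. -/
theorem stmt_15 (r m : ℕ) (hm : 0 < m) (u v : Fin m → ℕ)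
    (A : ∀ i, Fin (u i) → Fin (v i) → ℚ) (hA : ∀ i, IPR (A i))
    (E : Fin r → Set ℕ+) (hE : ∀ n : ℕ+, ∃ i, n ∈ E i) :
    ∃ (k : Fin r) (x : ∀ i, Fin (v i) → ℕ+),
      ∀ f : ∀ i, Fin (u i), ∃ n ∈ E k,
        (∏ i, mulVecQ (A i) (x i) (f i)) = ((n : ℕ) : ℚ) := by
  exact stmt_15_general A hA E hE
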